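/- ψ(1/10) = −γ − ln 20 − (√(10 + 2√5)/(√5 − 1))·(π/2) + (1/2)·(√5·ln(√5 − 2) − ln √5), where ψ is the digamma function and γ is the Euler–Mascheroni constant. -/

import Mathlib

noncomputable def digamma (x : ℝ) : ℝ := deriv Real.Gamma x / Real.Gamma x

open Real Filter Topology Set in
lemma dg_add_one {x : ℝ} (hx : 0 < x) : digamma (x + 1) = digamma x + 1 / x := by
  have hd : ∀ y : ℝ, 0 < y → DifferentiableAt ℝ Real.Gamma y := fun y hy =>
    Real.differentiableAt_Gamma (fun m => by
      have : (0:ℝ) ≤ m := Nat.cast_nonneg m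
      linarith)
  have h1 : HasDerivAt (fun y => Real.Gamma (y + 1)) (deriv Real.Gamma (x + 1)) x :=
    HasDerivAt.comp_add_const x 1 (hd (x + 1) (by linarith)).hasDerivAt
  have h2 : HasDerivAt (fun y => y * Real.Gamma y) (1 * Real.Gamma x + x * deriv Real.Gamma x) x :=
    (hasDerivAt_id x).mul (hd x hx).hasDerivAt
  have h3 : (fun y => Real.Gamma (y + 1)) =ᶠ[𝓝 x] (fun y => y * Real.Gamma y) := by
    filter_upwards [lt_mem_nhds hx] with y hy
    exact Real.Gamma_add_one hy.ne'
  have h4 := h1.unique (h2.congr_of_eventuallyEq h3)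
  have hG := (Real.Gamma_pos_of_pos hx).ne'
  unfold digamma
  rw [h4, Real.Gamma_add_one hx.ne']
  field_simp
  ring

open Real Filter Topology Set in
lemma dg_mono {x y : ℝ} (hx : 0 < x) (hxy : x ≤ y) : digamma x ≤ digamma y := by
  have hd : ∀ y : ℝ, 0 < y → HasDerivAt (Real.log ∘ Real.Gamma) (digamma y) y := fun y hy => by
    have := (Real.differentiableAt_Gamma (s := y) (fun m => by
      have : (0:ℝ) ≤ m := Nat.cast_nonneg m
      linarith)).hasDerivAt.log (Real.Gamma_pos_of_pos hy).ne'
    exact this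
  have := Real.convexOn_log_Gamma.monotoneOn_derivWithin
    (fun y hy => (hd y hy).differentiableAt.differentiableWithinAt)
  have h := this (show x ∈ Ioi 0 from hx) (show y ∈ Ioi 0 from hx.trans_le hxy) hxy
  rwa [derivWithin_of_isOpen isOpen_Ioi (show x ∈ Ioi 0 from hx),
    derivWithin_of_isOpen isOpen_Ioi (show y ∈ Ioi 0 from hx.trans_le hxy),
    (hd x hx).deriv, (hd y (hx.trans_le hxy)).deriv] at h

lemma dg_one : digamma 1 = -Real.eulerMascheroniConstant := by
  unfold digamma
  rw [Real.hasDerivAt_Gamma_one.deriv, Real.Gamma_one, div_one]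

lemma dg_add_nat {x : ℝ} (hx : 0 < x) (n : ℕ) :
    digamma (x + n) = digamma x + ∑ k ∈ Finset.range n, 1 / (x + k) := by
  induction n with
  | zero => simp
  | succ n ih =>
    rw [Finset.sum_range_succ, ← add_assoc, ← ih, Nat.cast_succ, ← add_assoc, dg_add_one]
    positivity

open Filter Topology in
lemma dg_tendsto :
    Tendsto (fun n : ℕ => ∑ k ∈ Finset.range n, (1 / (1 + k : ℝ) - 1 / (1 / 10 + k : ℝ))) atTop
      (𝓝 (digamma (1 / 10) + Real.eulerMascheroniConstant)) := by
  have h : ∀ n : ℕ, ∑ k ∈ Finset.range n, (1 / (1 + k : ℝ) - 1 / (1 / 10 + k : ℝ)) =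
      (digamma (1 / 10) + Real.eulerMascheroniConstant) +
        (digamma (1 + n) - digamma (1 / 10 + n)) := by
    intro n
    rw [dg_add_nat one_pos, dg_add_nat (by norm_num), dg_one, Finset.sum_sub_distrib]
    ring
  simp_rw [h]
  have h0 : Tendsto (fun n : ℕ => digamma (1 + n) - digamma (1 / 10 + n)) atTop (𝓝 0) := by
    refine tendsto_of_tendsto_of_tendsto_of_le_of_le' tendsto_const_nhds
      (tendsto_one_div_atTop_nhds_zero_nat (𝕜 := ℝ)) ?_ ?_
    · filter_upwards with n
      have := dg_mono (x := 1 / 10 + n) (y := 1 + n) (by positivity) (by linarith)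
      linarith
    · filter_upwards [eventually_gt_atTop 0] with n hn
      have hn' : (0:ℝ) < n := by exact_mod_cast hn
      have h1 := dg_mono (x := n) (y := 1 / 10 + n) hn' (by linarith)
      have h2 := dg_add_one hn'
      rw [add_comm (n:ℝ) 1] at h2
      linarith
  simpa using h0.const_add (digamma (1 / 10) + Real.eulerMascheroniConstant)

noncomputable def dgh (c u : ℝ) : ℝ := 2 * (c - 1) * (u + 1) / (u ^ 2 - 2 * c * u + 1)

lemma dg_q_pos {c : ℝ} (h1 : -1 < c) (h2 : c < 1) (u : ℝ) : 0 < u ^ 2 - 2 * c * u + 1 := by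
  nlinarith [sq_nonneg (u - c)]

lemma dgh_cont {c : ℝ} (h1 : -1 < c) (h2 : c < 1) : Continuous (dgh c) := by
  unfold dgh
  exact Continuous.div (by fun_prop) (by fun_prop) (fun u => (dg_q_pos h1 h2 u).ne')

open Real in
lemma dgh_integral {θ : ℝ} (h0 : 0 < θ) (hπ : θ < π) :
    ∫ u in (0:ℝ)..1, dgh (cos θ) u =
      (cos θ - 1) * log (2 - 2 * cos θ) - sin θ * (π - θ) := by
  have hs : 0 < sin θ := sin_pos_of_pos_of_lt_pi h0 hπ
  have hsc := sin_sq_add_cos_sq θ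
  have h1 : -1 < cos θ := by nlinarith
  have h2 : cos θ < 1 := by nlinarith
  have hder : ∀ u ∈ Set.uIcc (0:ℝ) 1, HasDerivAt (fun u => (cos θ - 1) *
      log (u ^ 2 - 2 * cos θ * u + 1) - 2 * sin θ * arctan ((u - cos θ) / sin θ))
      (dgh (cos θ) u) u := by
    intro u _
    have hq := dg_q_pos h1 h2 u
    have d1 : HasDerivAt (fun u : ℝ => u ^ 2 - 2 * cos θ * u + 1) (2 * u - 2 * cos θ) u := by
      have := (((hasDerivAt_id u).pow 2).sub ((hasDerivAt_id u).const_mul (2 * cos θ))).add_const 1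
      simpa using this
    have d2 := (((hasDerivAt_id u).sub_const (cos θ)).div_const (sin θ)).arctan
    have d3 := ((d1.log hq.ne').const_mul (cos θ - 1)).sub (d2.const_mul (2 * sin θ))
    refine d3.congr_deriv ?_
    have hq2 : 1 + ((u - cos θ) / sin θ) ^ 2 = (u ^ 2 - 2 * cos θ * u + 1) / sin θ ^ 2 := by
      field_simp
      linear_combination hsc
    simp only [id]
    rw [hq2]
    unfold dgh
    have hq' := hq.ne'
    generalize u ^ 2 - 2 * cos θ * u + 1 = Q at hq'
    field_simp
    linear_combination (-1) * hsc
  rw [intervalIntegral.integral_eq_sub_of_hasDerivAt hder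
    ((dgh_cont h1 h2).intervalIntegrable _ _)]
  have a1 : arctan ((1 - cos θ) / sin θ) = θ / 2 := by
    have : (1 - cos θ) / sin θ = tan (θ / 2) := by
      have e : θ = 2 * (θ / 2) := by ring
      have hc : 0 < cos (θ / 2) := cos_pos_of_mem_Ioo ⟨by linarith, by linarith⟩
      have hs' : 0 < sin (θ / 2) := sin_pos_of_pos_of_lt_pi (by linarith) (by linarith)
      rw [tan_eq_sin_div_cos, div_eq_div_iff hs.ne' hc.ne']
      have e1 : cos θ = 2 * cos (θ / 2) ^ 2 - 1 := by rw [← cos_two_mul, ← e]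
      have e2 : sin θ = 2 * sin (θ / 2) * cos (θ / 2) := by rw [← sin_two_mul, ← e]
      rw [e1, e2]
      linear_combination (-2 * cos (θ / 2)) * sin_sq_add_cos_sq (θ / 2)
    rw [this, arctan_tan (by linarith) (by linarith)]
  have a0 : arctan ((0 - cos θ) / sin θ) = θ - π / 2 := by
    have : (0 - cos θ) / sin θ = tan (θ - π / 2) := by
      rw [tan_eq_sin_div_cos, sin_sub_pi_div_two, cos_sub_pi_div_two]
      ring
    rw [this, arctan_tan (by linarith) (by linarith)]
  rw [a1, a0]
  have : (1:ℝ) ^ 2 - 2 * cos θ * 1 + 1 = 2 - 2 * cos θ := by ring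
  rw [this]
  norm_num
  ring

noncomputable def dgG (a b u : ℝ) : ℝ :=
  -2 * (1 / (u + 1)) + (dgh a u + dgh (-b) u) + (dgh b u + dgh (-a) u)

lemma dgG_mul {a b u : ℝ} (hab : a - b = 1 / 2) (hab' : a * b = 1 / 4)
    (ha : -1 < a) (ha' : a < 1) (hb : -1 < b) (hb' : b < 1) (hu : 0 ≤ u) :
    dgG a b u * (1 - u ^ 10) = 10 * (u ^ 9 - 1) := by
  have q1 := (dg_q_pos ha ha' u).ne'
  have q2 := (dg_q_pos hb hb' u).ne'
  have q3 := (dg_q_pos (c := -b) (by linarith) (by linarith) u).ne'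
  have q4 := (dg_q_pos (c := -a) (by linarith) (by linarith) u).ne'
  have p1 : (u ^ 2 - 2 * a * u + 1) * (u ^ 2 - 2 * (-b) * u + 1) =
      u ^ 4 - u ^ 3 + u ^ 2 - u + 1 := by
    linear_combination (-2 * u ^ 3 - 2 * u) * hab - 4 * u ^ 2 * hab'
  have p2 : (u ^ 2 - 2 * b * u + 1) * (u ^ 2 - 2 * (-a) * u + 1) =
      u ^ 4 + u ^ 3 + u ^ 2 + u + 1 := by
    linear_combination (2 * u ^ 3 + 2 * u) * hab - 4 * u ^ 2 * hab'
  have n1 : u ^ 4 - u ^ 3 + u ^ 2 - u + 1 ≠ 0 := p1 ▸ mul_ne_zero q1 q3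
  have n2 : u ^ 4 + u ^ 3 + u ^ 2 + u + 1 ≠ 0 := p2 ▸ mul_ne_zero q2 q4
  have s1 : dgh a u + dgh (-b) u =
      (u + 1) * (-3 * u ^ 2 + 4 * u - 3) / (u ^ 4 - u ^ 3 + u ^ 2 - u + 1) := by
    unfold dgh
    rw [div_add_div _ _ q1 q3, p1]
    congr 1
    linear_combination (u + 1) * ((2 * u ^ 2 + 2 + 4 * u) * hab + 8 * u * hab')
  have s2 : dgh b u + dgh (-a) u =
      (u + 1) * (-5 * u ^ 2 - 5) / (u ^ 4 + u ^ 3 + u ^ 2 + u + 1) := by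
    unfold dgh
    rw [div_add_div _ _ q2 q4, p2]
    congr 1
    linear_combination (u + 1) * ((-2 * u ^ 2 - 2 - 4 * u) * hab + 8 * u * hab')
  unfold dgG
  rw [s1, s2]
  have n3 : u + 1 ≠ 0 := by linarith
  generalize hA : u ^ 4 - u ^ 3 + u ^ 2 - u + 1 = A at n1
  generalize hB : u ^ 4 + u ^ 3 + u ^ 2 + u + 1 = B at n2
  field_simp
  rw [← hA, ← hB]
  ring

open Real Filter Topology in
lemma dg_eq_integral {a b : ℝ} (hab : a - b = 1 / 2) (hab' : a * b = 1 / 4)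
    (ha : -1 < a) (ha' : a < 1) (hb : -1 < b) (hb' : b < 1) :
    digamma (1 / 10) + Real.eulerMascheroniConstant = ∫ u in (0:ℝ)..1, dgG a b u := by
  have hc : ContinuousOn (dgG a b) (Set.Icc 0 1) := by
    unfold dgG
    have c1 := dgh_cont ha ha'
    have c2 := dgh_cont hb hb'
    have c3 := dgh_cont (c := -b) (by linarith) (by linarith)
    have c4 := dgh_cont (c := -a) (by linarith) (by linarith)
    refine ContinuousOn.add (ContinuousOn.add (continuousOn_const.mul
      (continuousOn_const.div (by fun_prop) ?_)) (by fun_prop)) (by fun_prop)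
    intro x hx
    linarith [hx.1]
  obtain ⟨C, hC⟩ := isCompact_Icc.exists_bound_of_continuousOn hc
  have hc' : ContinuousOn (dgG a b) (Set.uIcc 0 1) := by rwa [Set.uIcc_of_le zero_le_one]
  have hi : IntervalIntegrable (dgG a b) MeasureTheory.volume 0 1 := hc'.intervalIntegrable
  have hi2 : ∀ n : ℕ, IntervalIntegrable (fun u => dgG a b u * u ^ n) MeasureTheory.volume 0 1 :=
    fun n => (hc'.mul (by fun_prop)).intervalIntegrable
  refine tendsto_nhds_unique dg_tendsto ?_
  have key : ∀ n : ℕ, ∑ k ∈ Finset.range n, (1 / (1 + k : ℝ) - 1 / (1 / 10 + k : ℝ)) =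
      (∫ u in (0:ℝ)..1, dgG a b u) - ∫ u in (0:ℝ)..1, dgG a b u * u ^ (10 * n) := by
    intro n
    rw [← intervalIntegral.integral_sub hi (hi2 _)]
    have e : ∀ k : ℕ, 1 / (1 + k : ℝ) - 1 / (1 / 10 + k : ℝ) =
        ∫ u in (0:ℝ)..1, (10 * u ^ (10 * k + 9) - 10 * u ^ (10 * k)) := by
      intro k
      rw [intervalIntegral.integral_sub
        (Continuous.intervalIntegrable (by fun_prop) _ _)
        (Continuous.intervalIntegrable (by fun_prop) _ _)]
      rw [intervalIntegral.integral_const_mul, intervalIntegral.integral_const_mul,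
        integral_pow, integral_pow]
      push_cast
      have : (0:ℝ) ≤ k := Nat.cast_nonneg k
      simp
      field_simp
      ring
    rw [Finset.sum_congr rfl (fun k _ => e k), ← intervalIntegral.integral_finsetSum
      (fun k _ => Continuous.intervalIntegrable (by fun_prop) _ _)]
    refine intervalIntegral.integral_congr (fun u hu => ?_)
    rw [Set.uIcc_of_le zero_le_one] at hu
    have g := mul_neg_geom_sum (u ^ 10) n
    have m := dgG_mul hab hab' ha ha' hb hb' hu.1
    have s : ∑ k ∈ Finset.range n, (10 * u ^ (10 * k + 9) - 10 * u ^ (10 * k)) =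
        10 * (u ^ 9 - 1) * ∑ k ∈ Finset.range n, (u ^ 10) ^ k := by
      rw [Finset.mul_sum]
      refine Finset.sum_congr rfl (fun k _ => ?_)
      rw [← pow_mul, pow_add]
      ring
    rw [s, ← m, mul_assoc, g, ← pow_mul]
    ring
  simp_rw [key]
  have h0 : Tendsto (fun n : ℕ => ∫ u in (0:ℝ)..1, dgG a b u * u ^ (10 * n)) atTop (𝓝 0) := by
    have lim : Tendsto (fun n : ℕ => C * (1 / ((n:ℝ) + 1))) atTop (𝓝 0) := by
      simpa using (tendsto_one_div_add_atTop_nhds_zero_nat (𝕜 := ℝ)).const_mul C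
    refine squeeze_zero_norm (fun n => ?_) lim
    have hC0 : 0 ≤ C := (norm_nonneg _).trans (hC 0 ⟨le_rfl, zero_le_one⟩)
    have : ∫ u in (0:ℝ)..1, C * u ^ n = C * (1 / ((n:ℝ) + 1)) := by
      rw [intervalIntegral.integral_const_mul, integral_pow]
      simp
    rw [← this]
    refine intervalIntegral.norm_integral_le_of_norm_le zero_le_one ?_
      (Continuous.intervalIntegrable (by fun_prop) _ _)
    refine Filter.Eventually.of_forall (fun u hu => ?_)
    rw [norm_mul, norm_pow, Real.norm_of_nonneg hu.1.le]
    exact mul_le_mul (hC u ⟨hu.1.le, hu.2⟩) (pow_le_pow_of_le_one hu.1.le hu.2 (by omega))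
      (by have := hu.1; positivity) hC0
  simpa using tendsto_const_nhds.sub h0

open Real in
lemma dg_final : digamma (1 / 10) =
      -Real.eulerMascheroniConstant - Real.log 20
        - (Real.sqrt (10 + 2 * Real.sqrt 5) / (Real.sqrt 5 - 1)) * (Real.pi / 2)
        + (1 / 2) * (Real.sqrt 5 * Real.log (Real.sqrt 5 - 2) - Real.log (Real.sqrt 5)) := by
  have hπ := pi_pos
  set t := √5 with ht
  have ht2 : t ^ 2 = 5 := by rw [ht]; exact sq_sqrt (by norm_num)
  have ht0 : 0 < t := by rw [ht]; positivity
  have htl : 2 < t := by nlinarith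
  have htu : t < 3 := by nlinarith
  have c1 : cos (π / 5) = (1 + t) / 4 := cos_pi_div_five
  have c2 : cos (2 * π / 5) = (t - 1) / 4 := by
    rw [show 2 * π / 5 = 2 * (π / 5) by ring, cos_two_mul, c1]
    linear_combination (1 / 8) * ht2
  have c3 : cos (3 * π / 5) = -((t - 1) / 4) := by
    rw [show 3 * π / 5 = π - 2 * π / 5 by ring, cos_pi_sub, c2]
  have c4 : cos (4 * π / 5) = -((1 + t) / 4) := by
    rw [show 4 * π / 5 = π - π / 5 by ring, cos_pi_sub, c1]
  have s3 : sin (3 * π / 5) = sin (2 * π / 5) := by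
    rw [show 3 * π / 5 = π - 2 * π / 5 by ring, sin_pi_sub]
  have s4 : sin (4 * π / 5) = sin (π / 5) := by
    rw [show 4 * π / 5 = π - π / 5 by ring, sin_pi_sub]
  have s2 : sin (2 * π / 5) = √(10 + 2 * t) / 4 := by
    have hp : 0 < sin (2 * π / 5) := sin_pos_of_pos_of_lt_pi (by positivity) (by linarith)
    have : √(10 + 2 * t) = 4 * sin (2 * π / 5) := by
      rw [sqrt_eq_iff_mul_self_eq (by positivity) (by positivity)]
      have := sin_sq_add_cos_sq (2 * π / 5)
      rw [c2] at this
      linear_combination (-16) * this + ht2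
    rw [this]; ring
  have s1 : sin (2 * π / 5) = 2 * sin (π / 5) * ((1 + t) / 4) := by
    rw [← c1, ← sin_two_mul]; congr 1; ring
  have i1 := dgh_integral (θ := π / 5) (by positivity) (by linarith)
  have i2 := dgh_integral (θ := 2 * π / 5) (by positivity) (by linarith)
  have i3 := dgh_integral (θ := 3 * π / 5) (by positivity) (by linarith)
  have i4 := dgh_integral (θ := 4 * π / 5) (by positivity) (by linarith)
  rw [c1] at i1
  rw [c2] at i2
  rw [c3, s3] at i3
  rw [c4, s4] at i4
  have i0 : ∫ u in (0:ℝ)..1, -2 * (1 / (u + 1)) = -2 * log 2 := by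
    rw [intervalIntegral.integral_const_mul,
      intervalIntegral.integral_comp_add_right (fun x => 1 / x), integral_one_div_of_pos] <;> norm_num
  have main := dg_eq_integral (a := (1 + t) / 4) (b := (t - 1) / 4) (by ring)
    (by linear_combination (1 / 16) * ht2) (by linarith) (by linarith) (by linarith) (by linarith)
  have j0 : IntervalIntegrable (fun u : ℝ => -2 * (1 / (u + 1))) MeasureTheory.volume 0 1 := by
    refine ContinuousOn.intervalIntegrable (continuousOn_const.mul
      (continuousOn_const.div (by fun_prop) ?_))
    intro x hx
    rw [Set.uIcc_of_le zero_le_one] at hx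
    linarith [hx.1]
  have j : ∀ c : ℝ, -1 < c → c < 1 → IntervalIntegrable (dgh c) MeasureTheory.volume 0 1 :=
    fun c h h' => (dgh_cont h h').intervalIntegrable _ _
  have j1 := j ((1 + t) / 4) (by linarith) (by linarith)
  have j2 := j ((t - 1) / 4) (by linarith) (by linarith)
  have j3 := j (-((t - 1) / 4)) (by linarith) (by linarith)
  have j4 := j (-((1 + t) / 4)) (by linarith) (by linarith)
  unfold dgG at main
  rw [intervalIntegral.integral_add (j0.add (j1.add j3)) (j2.add j4),
    intervalIntegral.integral_add j0 (j1.add j3), intervalIntegral.integral_add j1 j3,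
    intervalIntegral.integral_add j2 j4, i0, i1, i2, i3, i4] at main
  have hφ : 0 < (1 + t) / 2 := by positivity
  have l1 : log (2 - 2 * ((1 + t) / 4)) = -2 * log ((1 + t) / 2) := by
    have : 2 - 2 * ((1 + t) / 4) = (((1 + t) / 2) ^ 2)⁻¹ := by
      apply eq_inv_of_mul_eq_one_left
      linear_combination ((1 - t) / 8) * ht2
    rw [this, log_inv, log_pow]; push_cast; ring
  have l3 : log (2 - 2 * (-((t - 1) / 4))) = 2 * log ((1 + t) / 2) := by
    have : 2 - 2 * (-((t - 1) / 4)) = ((1 + t) / 2) ^ 2 := by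
      linear_combination (-1 / 4) * ht2
    rw [this, log_pow]; push_cast; ring
  have l2 : log (2 - 2 * ((t - 1) / 4)) = log t - log ((1 + t) / 2) := by
    rw [← log_div ht0.ne' hφ.ne']
    congr 1
    rw [eq_div_iff hφ.ne']
    linear_combination (-1 / 4) * ht2
  have l4 : log (2 - 2 * (-((1 + t) / 4))) = log t + log ((1 + t) / 2) := by
    rw [← log_mul ht0.ne' hφ.ne']
    congr 1
    linear_combination (-1 / 2) * ht2
  have l5 : log (t - 2) = -3 * log ((1 + t) / 2) := by
    have : t - 2 = (((1 + t) / 2) ^ 3)⁻¹ := by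
      apply eq_inv_of_mul_eq_one_left
      linear_combination ((t ^ 2 + t + 2) / 8) * ht2
    rw [this, log_inv, log_pow]; push_cast; ring
  have l6 : log 20 = 2 * log 2 + 2 * log t := by
    have : (20:ℝ) = 2 ^ 2 * t ^ 2 := by rw [ht2]; norm_num
    rw [this, log_mul (by norm_num) (by positivity), log_pow, log_pow]; push_cast; ring
  have hS : √(10 + 2 * t) / (t - 1) = 2 * (sin (π / 5) + sin (2 * π / 5)) := by
    have h1 : √(10 + 2 * t) = 2 * sin (π / 5) * (1 + t) := by
      linear_combination (-4) * s2 + 4 * s1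
    rw [s1, h1, div_eq_iff (by linarith)]
    linear_combination (-sin (π / 5)) * ht2
  rw [l1, l2, l3, l4] at main
  rw [hS, l5, l6]
  linear_combination main

theorem digamma_one_tenth :
    digamma (1 / 10) =
      -Real.eulerMascheroniConstant - Real.log 20
        - (Real.sqrt (10 + 2 * Real.sqrt 5) / (Real.sqrt 5 - 1)) * (Real.pi / 2)
        + (1 / 2) * (Real.sqrt 5 * Real.log (Real.sqrt 5 - 2) - Real.log (Real.sqrt 5)) :=
  dg_final
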